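/- arXiv:1501.02618 — 2 statements merged into one kernel-verified Lean document; each statement's English description precedes it below -/
import Mathlib

section
/- There exists an absolute constant c > 0 such that for every t > 1 and all x, w with 1 < x < w/2 and w > 1 + 2√t, one has p₁(t,x,w) ≥ c · min(1, ln x / ln(3t)) · p(t,x,w). -/
open Real MeasureTheory

/-- Modified Bessel function of the first kind, order 0. -/
noncomputable def I0 (z : ℝ) : ℝ := ∑' n : ℕ, (z/2)^(2*n) / ((n.factorial : ℝ))^2

/-- Modified Bessel function of the first kind, order 1. -/
noncomputable def I1 (z : ℝ) : ℝ :=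
  ∑' n : ℕ, (z/2)^(2*n+1) / ((n.factorial : ℝ) * ((n+1).factorial : ℝ))

/-- Heat kernel of the Bessel operator `d²/dx² + (1/x) d/dx` on `(0,∞)`
with respect to the measure `y dy`. -/
noncomputable def pk (t x y : ℝ) : ℝ :=
  t⁻¹ * Real.exp (-(x^2 + y^2)/(2*t)) * I0 (x*y/t)

/-- The function `h` from (AC): Dirichlet heat kernel of `(1/2) d²/dx²` on `(1,∞)`
multiplied by `(xy)⁻¹`. -/
noncomputable def hker (t x y : ℝ) : ℝ :=
  (2*Real.pi*t)^(-(1:ℝ)/2) * (x*y)⁻¹ *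
    (Real.exp (-(x-y)^2/(2*t)) - Real.exp (-(x+y-2)^2/(2*t)))

/-- Bundled hypotheses on the Dirichlet heat kernel `p₁` of the Bessel operator on
`(1,∞)` and on the density `q` of the first hitting time of `1` by the
2-dimensional Bessel process. -/
structure BesselHK (p₁ : ℝ → ℝ → ℝ → ℝ) (q : ℝ → ℝ → ℝ) : Prop where
  meas_p₁ : Measurable fun z : ℝ × ℝ × ℝ => p₁ z.1 z.2.1 z.2.2
  meas_q : Measurable fun z : ℝ × ℝ => q z.1 z.2
  p₁_nonneg : ∀ ⦃t x y : ℝ⦄, 0 < t → 1 < x → 1 < y → 0 ≤ p₁ t x y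
  q_nonneg : ∀ ⦃x s : ℝ⦄, 1 < x → 0 < s → 0 ≤ q x s
  hunt : ∀ ⦃t x y : ℝ⦄, 0 < t → 1 < x → 1 < y →
    p₁ t x y = pk t x y - ∫ u in Set.Ioo 0 t, q x u * pk (t-u) 1 y
  symm : ∀ ⦃t x y : ℝ⦄, 0 < t → 1 < x → 1 < y → p₁ t x y = p₁ t y x
  ck : ∀ ⦃t s x y : ℝ⦄, 0 < t → 0 < s → 1 < x → 1 < y →
    p₁ (t+s) x y = ∫ w in Set.Ioi (1:ℝ), p₁ t x w * p₁ s w y * w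
  mass : ∀ ⦃t x : ℝ⦄, 0 < t → 1 < x →
    (∫ y in Set.Ioi (1:ℝ), p₁ t x y * y) = ∫ u in Set.Ioi t, q x u
  q1 : ∃ c C : ℝ, 0 < c ∧ c ≤ C ∧ ∀ ⦃x s : ℝ⦄, 1 < x → 0 < s →
    ((s < 2*x →
      c * (((x-1)/Real.sqrt x) * s^(-(3:ℝ)/2) * Real.exp (-(x-1)^2/(2*s))) ≤ q x s ∧
      q x s ≤ C * (((x-1)/Real.sqrt x) * s^(-(3:ℝ)/2) * Real.exp (-(x-1)^2/(2*s)))) ∧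
     (2*x ≤ s →
      c * (((x-1)/x) * ((1+Real.log x)/((1+Real.log (s+x))*(1+Real.log (1+s/x)))) *
        s⁻¹ * Real.exp (-(x-1)^2/(2*s))) ≤ q x s ∧
      q x s ≤ C * (((x-1)/x) * ((1+Real.log x)/((1+Real.log (s+x))*(1+Real.log (1+s/x)))) *
        s⁻¹ * Real.exp (-(x-1)^2/(2*s)))))
  q2 : ∀ ⦃x s : ℝ⦄, 1 < x → 0 < s →
    ((x-1)/Real.sqrt (2*Real.pi*x)) * s^(-(3:ℝ)/2) * Real.exp (-(x-1)^2/(2*s)) ≤ q x s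
  surv : ∃ c' C' : ℝ, 0 < c' ∧ c' ≤ C' ∧ ∀ ⦃t x : ℝ⦄, 0 < t → 1 < x →
    c' * min 1 (Real.log x / Real.log (1+Real.sqrt t)) ≤ (∫ u in Set.Ioi t, q x u) ∧
    (∫ u in Set.Ioi t, q x u) ≤ C' * min 1 (Real.log x / Real.log (1+Real.sqrt t))
  ac : ∀ ⦃t x y : ℝ⦄, 0 < t → 1 < x → 1 < y →
    Real.sqrt (x*y) * hker t x y ≤ p₁ t x y ∧
    p₁ t x y ≤ Real.exp (t/8) * Real.sqrt (x*y) * hker t x y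

/-!
Put `r = t / w`, so that `4 r² ≤ t`. If `t ≤ max R x * w` for a suitable constant `R`, the
reflection factor in the half-line bound `√(xy) h ≤ p₁` is already at least a constant times
`min 1 (x - 1)`, which dominates `min 1 (log x / log (3 t))`.

Otherwise split the path at time `r²` by Chapman–Kolmogorov. The mass surviving until then is of
order `min 1 (log x / log r)`, and a Gaussian upper bound for `p₁ (r²) x` with the same prefactor
shows that a fixed share of it sits in an annulus `a r ≤ z ≤ r / a`. From there the half-line bound
over the remaining time is comparable to `t⁻¹ exp (-w² / (2 t))`, hence to `p (t, x, w)`, because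
moving the starting point by `O(r)` changes the exponent by only `O(r w / t) = O(1)`.

The Gaussian upper bound comes from a further splitting at time `r`. Surviving until time `r` costs
as much as surviving until time `r²`, since `log (1 + √r)` and `log (1 + r)` are comparable, and the
factor `exp (r / 8)` in the upper half-line bound is beaten by the Gaussian decay at distances
`y ≥ 32 r`.
-/

section BesselFunction

theorem two_mul_add_one_mul_centralBinom_sq_le (n : ℕ) :
    (2 * n + 1) * n.centralBinom ^ 2 ≤ 16 ^ n := by
  induction n with
  | zero => simp
  | succ n ih =>
    refine le_of_mul_le_mul_left ?_ (pow_pos n.succ_pos 2)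
    calc (n + 1) ^ 2 * ((2 * (n + 1) + 1) * (n + 1).centralBinom ^ 2)
        = (2 * n + 3) * ((n + 1) * (n + 1).centralBinom) ^ 2 := by ring
      _ = 4 * ((2 * n + 3) * (2 * n + 1)) * ((2 * n + 1) * n.centralBinom ^ 2) := by
          rw [Nat.succ_mul_centralBinom_succ]; ring
      _ ≤ 4 * (4 * (n + 1) ^ 2) * 16 ^ n :=
          Nat.mul_le_mul (Nat.mul_le_mul_left 4 (by nlinarith)) ih
      _ = (n + 1) ^ 2 * 16 ^ (n + 1) := by ring

theorem centralBinom_div_four_pow_le_inv_sqrt (n : ℕ) :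
    (n.centralBinom : ℝ) / 4 ^ n ≤ (√(2 * n + 1))⁻¹ := by
  rw [← sqrt_inv]
  refine le_sqrt_of_sq_le ?_
  have h : ((2 * n + 1) * n.centralBinom ^ 2 : ℝ) ≤ 16 ^ n :=
    mod_cast two_mul_add_one_mul_centralBinom_sq_le n
  have h16 : ((4 : ℝ) ^ n) ^ 2 = 16 ^ n := by rw [← pow_mul, mul_comm, pow_mul]; norm_num
  rw [div_pow, h16, inv_eq_one_div, div_le_div_iff₀ (by positivity) (by positivity)]
  linarith

theorem centralBinom_div_four_pow_le_one (n : ℕ) : (n.centralBinom : ℝ) / 4 ^ n ≤ 1 :=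
  div_le_one_of_le₀ (mod_cast n.centralBinom_le_four_pow) (by positivity)

theorem I0_term_eq (z : ℝ) (n : ℕ) : (z / 2) ^ (2 * n) / (n.factorial : ℝ) ^ 2 =
    z ^ (2 * n) / (2 * n).factorial * (n.centralBinom / 4 ^ n) := by
  have hfactorial : ((2 * n).factorial : ℝ) = n.centralBinom * n.factorial ^ 2 := by
    have h := Nat.choose_mul_factorial_mul_factorial (show n ≤ 2 * n by lia)
    rw [← Nat.centralBinom_eq_two_mul_choose, show 2 * n - n = n by lia] at h
    rw [← h]; push_cast; ring
  have hcentral : (n.centralBinom : ℝ) ≠ 0 := mod_cast n.centralBinom_ne_zero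
  rw [hfactorial, div_pow, pow_mul 2]
  norm_num
  field_simp

theorem I0_term_nonneg (z : ℝ) (n : ℕ) : 0 ≤ (z / 2) ^ (2 * n) / (n.factorial : ℝ) ^ 2 :=
  div_nonneg (by rw [pow_mul]; positivity) (by positivity)

theorem I0_term_le (z : ℝ) (n : ℕ) :
    (z / 2) ^ (2 * n) / (n.factorial : ℝ) ^ 2 ≤ z ^ (2 * n) / (2 * n).factorial := by
  rw [I0_term_eq]
  exact mul_le_of_le_one_right (div_nonneg (by rw [pow_mul]; positivity) (by positivity))
    (centralBinom_div_four_pow_le_one n)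

theorem I0_summable (z : ℝ) :
    Summable fun n : ℕ ↦ (z / 2) ^ (2 * n) / (n.factorial : ℝ) ^ 2 :=
  .of_nonneg_of_le (I0_term_nonneg z) (I0_term_le z) (hasSum_cosh z).summable

theorem I0_le_cosh (z : ℝ) : I0 z ≤ cosh z := by
  rw [← (hasSum_cosh z).tsum_eq]
  exact (I0_summable z).tsum_le_tsum (I0_term_le z) (hasSum_cosh z).summable

theorem I0_le_exp {z : ℝ} (hz : 0 ≤ z) : I0 z ≤ exp z := by
  have hsinh : 0 ≤ sinh z := sinh_nonneg_iff.2 hz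
  linarith [I0_le_cosh z, cosh_add_sinh z]

-- AM-GM: the factor `√z / √(2n+1)` is at most half of `1 + z / (2n+1)`, and multiplying by the
-- `n`-th term of `cosh` turns the latter into the `n`-th terms of `cosh` and `sinh`.
theorem two_mul_sqrt_mul_I0_term_le {z : ℝ} (hz : 0 ≤ z) (n : ℕ) :
    2 * √z * ((z / 2) ^ (2 * n) / (n.factorial : ℝ) ^ 2) ≤
      z ^ (2 * n) / (2 * n).factorial + z ^ (2 * n + 1) / (2 * n + 1).factorial := by
  have hamgm : 2 * √z * (√(2 * n + 1))⁻¹ ≤ 1 + z / (2 * n + 1) := by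
    have h := two_mul_le_add_sq 1 (√z * (√(2 * n + 1))⁻¹)
    rw [mul_pow, inv_pow, sq_sqrt hz, sq_sqrt (by positivity)] at h
    rw [div_eq_mul_inv]
    linarith
  calc 2 * √z * ((z / 2) ^ (2 * n) / (n.factorial : ℝ) ^ 2)
      = z ^ (2 * n) / (2 * n).factorial * (2 * √z * (n.centralBinom / 4 ^ n)) := by
        rw [I0_term_eq]; ring
    _ ≤ z ^ (2 * n) / (2 * n).factorial * (1 + z / (2 * n + 1)) := by
        gcongr
        exact (mul_le_mul_of_nonneg_left (centralBinom_div_four_pow_le_inv_sqrt n)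
          (by positivity)).trans hamgm
    _ = _ := by
        rw [Nat.factorial_succ]; push_cast; field_simp; ring

theorem I0_le_exp_div_two_mul_sqrt {z : ℝ} (hz : 0 < z) : I0 z ≤ exp z / (2 * √z) := by
  have hexp := (hasSum_cosh z).add (hasSum_sinh z)
  rw [cosh_add_sinh] at hexp
  rw [le_div_iff₀' (by positivity), ← hexp.tsum_eq, I0, ← tsum_mul_left]
  exact ((I0_summable z).mul_left _).tsum_le_tsum (two_mul_sqrt_mul_I0_term_le hz.le)
    hexp.summable

end BesselFunction

section ElementaryEstimates

theorem min_one_div_two_le_one_sub_exp_neg {v : ℝ} (hv : 0 ≤ v) :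
    min 1 v / 2 ≤ 1 - exp (-v) := by
  have hexp : exp (-v) ≤ (1 + v)⁻¹ := by
    rw [exp_neg]; gcongr; linarith [add_one_le_exp v]
  have hmin : min 1 v * (1 + v) ≤ 2 * v := by
    rcases le_total 1 v with h | h
    · rw [min_eq_left h]; linarith
    · rw [min_eq_right h]; nlinarith
  have hinv : 1 - (1 + v)⁻¹ = v / (1 + v) := by field_simp; ring
  have : min 1 v / 2 ≤ v / (1 + v) := by
    rw [div_le_div_iff₀ two_pos (by positivity)]; linarith
  linarith

theorem exp_neg_sub_sq_div_le {s : ℝ} (hs : 0 < s) (y z : ℝ) :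
    exp (-(y - z) ^ 2 / (2 * s)) ≤ exp (-z ^ 2 / (4 * s)) * exp (y ^ 2 / (2 * s)) := by
  rw [← exp_add, exp_le_exp, ← sub_nonneg]
  have : -z ^ 2 / (4 * s) + y ^ 2 / (2 * s) - -(y - z) ^ 2 / (2 * s) =
      (z - 2 * y) ^ 2 / (4 * s) := by field_simp; ring
  rw [this]
  positivity

theorem far_exponent_le {r x y : ℝ} (hr : 8 ≤ r) (hx : x ^ 2 ≤ r) (hy : 32 * r ≤ y) :
    r / 8 + -(x - y) ^ 2 / (2 * r) + y ^ 2 / (2 * r ^ 2) ≤ 1 / 2 - 5 * y := by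
  have hr0 : 0 < r := by linarith
  have hshift : -(x - y) ^ 2 / (2 * r) ≤ x ^ 2 / r / 2 - y ^ 2 / r / 4 := by
    rw [← sub_nonneg]
    have : x ^ 2 / r / 2 - y ^ 2 / r / 4 - -(x - y) ^ 2 / (2 * r) =
        (y - 2 * x) ^ 2 / (4 * r) := by field_simp; ring
    rw [this]
    positivity
  have hx_div : x ^ 2 / r ≤ 1 := div_le_one_of_le₀ hx hr0.le
  have hweight : y ^ 2 / (2 * r ^ 2) ≤ y ^ 2 / r / 16 := by
    rw [div_div]
    exact div_le_div_of_nonneg_left (by positivity) (by positivity) (by nlinarith)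
  have hy_div : 32 * y ≤ y ^ 2 / r := by
    rw [le_div_iff₀ hr0]
    nlinarith
  linarith

theorem mul_exp_neg_sq_le {a r z : ℝ} (ha : 0 < a) (hr : 0 < r) (hz : 0 < z)
    (h : z ∉ Set.Icc (a * r) (r / a)) :
    z * exp (-z ^ 2 / (4 * r ^ 2)) ≤ 8 * a * r * exp (-(1 / (8 * r ^ 2)) * z ^ 2) := by
  set v := z ^ 2 / (8 * r ^ 2) with hv
  have hsplit : -z ^ 2 / (4 * r ^ 2) = -v + -v := by rw [hv]; field_simp; ring
  have hkey : z * exp (-v) ≤ 8 * a * r := by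
    by_cases hza : z < a * r
    · have : exp (-v) ≤ 1 := exp_le_one_iff.2 (neg_nonpos.2 (by positivity))
      nlinarith [mul_pos ha hr]
    · have hzr : r < a * z := by
        rw [← div_lt_iff₀' ha]
        exact not_le.1 fun hle ↦ h ⟨not_lt.1 hza, hle⟩
      have hvexp : v * exp (-v) ≤ 1 :=
        (mul_exp_neg_le_exp_neg_one v).trans (exp_le_one_iff.2 (by norm_num))
      refine le_of_mul_le_mul_left ?_ hr
      calc r * (z * exp (-v)) ≤ a * z * (z * exp (-v)) := by gcongr
        _ = 8 * a * r ^ 2 * (v * exp (-v)) := by rw [hv]; field_simp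
        _ ≤ 8 * a * r ^ 2 * 1 := by gcongr
        _ = r * (8 * a * r) := by ring
  calc z * exp (-z ^ 2 / (4 * r ^ 2)) = z * exp (-v) * exp (-v) := by
        rw [hsplit, exp_add, mul_assoc]
    _ ≤ 8 * a * r * exp (-v) := by gcongr
    _ = _ := by rw [hv]; congr 2; ring

theorem setIntegral_mul_exp_neg_sq_sdiff_Icc_le {a r : ℝ} (ha : 0 < a) (hr : 0 < r) :
    ∫ z in Set.Ioi 0 \ Set.Icc (a * r) (r / a), z * exp (-z ^ 2 / (4 * r ^ 2)) ≤
      24 * a * r ^ 2 := by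
  have hint : IntegrableOn (fun z ↦ 8 * a * r * exp (-(1 / (8 * r ^ 2)) * z ^ 2)) (Set.Ioi 0) :=
    ((integrable_exp_neg_mul_sq (by positivity)).const_mul _).integrableOn
  have hsqrt : √(π / (1 / (8 * r ^ 2))) ≤ 6 * r := by
    refine sqrt_le_iff.2 ⟨by positivity, ?_⟩
    rw [div_div_eq_mul_div, div_one]
    nlinarith [pi_lt_four, sq_pos_of_pos hr]
  calc ∫ z in Set.Ioi 0 \ Set.Icc (a * r) (r / a), z * exp (-z ^ 2 / (4 * r ^ 2))
      ≤ ∫ z in Set.Ioi 0 \ Set.Icc (a * r) (r / a),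
          8 * a * r * exp (-(1 / (8 * r ^ 2)) * z ^ 2) :=
        setIntegral_mono_of_nonneg
          (fun z hz ↦ mul_nonneg (le_of_lt hz.1) (exp_nonneg _))
          (fun z hz ↦ mul_exp_neg_sq_le ha hr hz.1 hz.2) (hint.mono_set Set.sdiff_subset)
    _ ≤ ∫ z in Set.Ioi 0, 8 * a * r * exp (-(1 / (8 * r ^ 2)) * z ^ 2) :=
        setIntegral_mono_set hint (.of_forall fun z ↦ by positivity)
          Set.sdiff_subset.eventuallyLE
    _ = 8 * a * r * (√(π / (1 / (8 * r ^ 2))) / 2) := by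
        rw [integral_const_mul, integral_gaussian_Ioi]
    _ ≤ 8 * a * r * (6 * r / 2) := by gcongr
    _ = 24 * a * r ^ 2 := by ring

end ElementaryEstimates

section Kernels

variable {s t x y : ℝ}

theorem pk_eq (ht : 0 < t) (x y : ℝ) : pk t x y =
    t⁻¹ * exp (-(x - y) ^ 2 / (2 * t)) * (exp (-(x * y / t)) * I0 (x * y / t)) := by
  have hexp : exp (-(x ^ 2 + y ^ 2) / (2 * t)) =
      exp (-(x - y) ^ 2 / (2 * t)) * exp (-(x * y / t)) := by
    rw [← exp_add]; congr 1; field_simp; ring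
  rw [pk, hexp]
  ring

theorem pk_nonneg (ht : 0 < t) (x y : ℝ) : 0 ≤ pk t x y :=
  mul_nonneg (by positivity) (tsum_nonneg (I0_term_nonneg _))

theorem pk_le_inv_mul_exp (ht : 0 < t) (hx : 0 ≤ x) (hy : 0 ≤ y) :
    pk t x y ≤ t⁻¹ * exp (-(x - y) ^ 2 / (2 * t)) := by
  rw [pk_eq ht, exp_neg (x * y / t)]
  exact mul_le_of_le_one_right (by positivity)
    (inv_mul_le_one_of_le₀ (I0_le_exp (by positivity)) (exp_nonneg _))

theorem pk_le_exp_one_mul_of_mul_le (ht : 0 < t) (hx : 0 ≤ x) (hy : 0 ≤ y) (hxy : x * y ≤ t) :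
    pk t x y ≤ exp 1 * (t⁻¹ * exp (-y ^ 2 / (2 * t))) := by
  have hexp : -(x - y) ^ 2 / (2 * t) ≤ 1 + -y ^ 2 / (2 * t) := by
    rw [div_le_iff₀ (by positivity), add_mul, div_mul_cancel₀ _ (by positivity)]
    nlinarith
  calc pk t x y ≤ t⁻¹ * exp (-(x - y) ^ 2 / (2 * t)) := pk_le_inv_mul_exp ht hx hy
    _ ≤ t⁻¹ * exp (1 + -y ^ 2 / (2 * t)) := by gcongr
    _ = _ := by rw [exp_add]; ring

theorem pk_le_inv_sqrt_mul_exp (ht : 0 < t) (hx : 0 < x) (hy : 0 < y) :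
    pk t x y ≤ (2 * √(t * (x * y)))⁻¹ * exp (-(x - y) ^ 2 / (2 * t)) := by
  have hI0 : exp (-(x * y / t)) * I0 (x * y / t) ≤ (2 * √(x * y / t))⁻¹ := by
    rw [exp_neg, inv_mul_le_iff₀ (exp_pos _), ← div_eq_mul_inv]
    exact I0_le_exp_div_two_mul_sqrt (by positivity)
  have hsqrt : t * √(x * y / t) = √(t * (x * y)) := by
    rw [eq_comm, sqrt_eq_iff_mul_self_eq (by positivity) (by positivity), mul_mul_mul_comm,
      mul_self_sqrt (by positivity)]
    field_simp
  calc pk t x y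
      ≤ t⁻¹ * exp (-(x - y) ^ 2 / (2 * t)) * (2 * √(x * y / t))⁻¹ := by
        rw [pk_eq ht]; gcongr
    _ = _ := by rw [← hsqrt]; simp only [mul_inv]; ring

theorem pk_le_mul_exp_sq (hs : 0 < s) (hst : s ≤ t) (hts : t ≤ 2 * s) (hx : 0 ≤ x)
    (hy : 0 ≤ y) :
    pk s x y ≤ 2 / t * exp (-y ^ 2 / (4 * t)) * exp (x ^ 2 / (2 * t)) := by
  have ht : 0 < t := hs.trans_le hst
  have hinv : s⁻¹ ≤ 2 / t := by
    rw [inv_eq_one_div, div_le_div_iff₀ hs ht]; linarith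
  have hexp : exp (-(x - y) ^ 2 / (2 * s)) ≤ exp (-(x - y) ^ 2 / (2 * t)) := by
    rw [exp_le_exp, neg_div, neg_div, neg_le_neg_iff]
    gcongr
  calc pk s x y ≤ s⁻¹ * exp (-(x - y) ^ 2 / (2 * s)) := pk_le_inv_mul_exp hs hx hy
    _ ≤ 2 / t * (exp (-y ^ 2 / (4 * t)) * exp (x ^ 2 / (2 * t))) := by
        gcongr
        exact hexp.trans (exp_neg_sub_sq_div_le ht x y)
    _ = _ := by ring

theorem sqrt_mul_hker_eq (ht : 0 < t) (x y : ℝ) :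
    √(x * y) * hker t x y = (√(2 * π * t * (x * y)))⁻¹ * exp (-(x - y) ^ 2 / (2 * t)) *
      (1 - exp (-(2 * (x - 1) * (y - 1) / t))) := by
  have hreflect : exp (-(x + y - 2) ^ 2 / (2 * t)) =
      exp (-(x - y) ^ 2 / (2 * t)) * exp (-(2 * (x - 1) * (y - 1) / t)) := by
    rw [← exp_add]; congr 1; field_simp; ring
  have hpow : (2 * π * t) ^ (-(1 : ℝ) / 2) = (√(2 * π * t))⁻¹ := by
    rw [neg_div, rpow_neg (by positivity), sqrt_eq_rpow]
  rw [hker, hreflect, hpow, sqrt_mul (by positivity) (x * y), mul_inv (√(2 * π * t)),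
    ← sqrt_div_self (x := x * y)]
  ring

theorem one_sub_exp_reflection_pos (ht : 0 < t) (hx : 1 < x) (hy : 1 < y) :
    0 < 1 - exp (-(2 * (x - 1) * (y - 1) / t)) := by
  rw [sub_pos, exp_lt_one_iff, neg_lt_zero]
  exact div_pos (mul_pos (by linarith) (by linarith)) ht

theorem sqrt_mul_hker_pos (ht : 0 < t) (hx : 1 < x) (hy : 1 < y) : 0 < √(x * y) * hker t x y := by
  rw [sqrt_mul_hker_eq ht]
  exact mul_pos (by positivity) (one_sub_exp_reflection_pos ht hx hy)

theorem sqrt_mul_hker_le (ht : 1 ≤ t) (hx : 1 < x) (hy : 1 < y) :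
    √(x * y) * hker t x y ≤ exp (-(x - y) ^ 2 / (2 * t)) * (2 * (x - 1) * y) := by
  have ht0 : 0 < t := by linarith
  have hsqrt : (√(2 * π * t * (x * y)))⁻¹ ≤ 1 := by
    refine inv_le_one_of_one_le₀ (one_le_sqrt.2 ?_)
    exact one_le_mul_of_one_le_of_one_le
      (one_le_mul_of_one_le_of_one_le (by linarith [pi_gt_three]) ht)
      (one_le_mul_of_one_le_of_one_le hx.le hy.le)
  have hreflect : 1 - exp (-(2 * (x - 1) * (y - 1) / t)) ≤ 2 * (x - 1) * y := by
    have hdiv : 2 * (x - 1) * (y - 1) / t ≤ 2 * (x - 1) * (y - 1) :=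
      div_le_self (mul_nonneg (by linarith) (by linarith)) ht
    nlinarith [add_one_le_exp (-(2 * (x - 1) * (y - 1) / t))]
  rw [sqrt_mul_hker_eq ht0]
  gcongr
  · exact (one_sub_exp_reflection_pos ht0 hx hy).le
  · exact mul_le_of_le_one_left (exp_nonneg _) hsqrt

theorem min_one_reflection_mul_pk_le (ht : 0 < t) (hx : 1 < x) (hy : 1 < y) :
    (√(2 * π))⁻¹ * min 1 (2 * (x - 1) * (y - 1) / t) * pk t x y ≤ √(x * y) * hker t x y := by
  have hx0 : 0 < x := by linarith
  have hy0 : 0 < y := by linarith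
  have hv : 0 ≤ 2 * (x - 1) * (y - 1) / t :=
    div_nonneg (mul_nonneg (by linarith) (by linarith)) ht.le
  calc (√(2 * π))⁻¹ * min 1 (2 * (x - 1) * (y - 1) / t) * pk t x y
      ≤ (√(2 * π))⁻¹ * min 1 (2 * (x - 1) * (y - 1) / t) *
          ((2 * √(t * (x * y)))⁻¹ * exp (-(x - y) ^ 2 / (2 * t))) := by
        gcongr; exact pk_le_inv_sqrt_mul_exp ht hx0 hy0
    _ = (√(2 * π * t * (x * y)))⁻¹ * exp (-(x - y) ^ 2 / (2 * t)) *
          (min 1 (2 * (x - 1) * (y - 1) / t) / 2) := by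
        rw [mul_assoc (2 * π), sqrt_mul (by positivity) (t * (x * y)), mul_inv, mul_inv]; ring
    _ ≤ _ := by
        rw [sqrt_mul_hker_eq ht]
        gcongr
        exact min_one_div_two_le_one_sub_exp_neg hv

theorem inv_mul_min_one_sub_one_le_min_one_reflection {R : ℝ} (hR : 2 ≤ R) (ht : 0 < t)
    (hx : 1 < x) (hy : 2 ≤ y) (hty : t ≤ max R x * y) :
    R⁻¹ * min 1 (x - 1) ≤ min 1 (2 * (x - 1) * (y - 1) / t) := by
  have hratio : R⁻¹ * min 1 (x - 1) * max R x ≤ x - 1 := by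
    rw [mul_assoc, inv_mul_le_iff₀ (by positivity)]
    rcases le_total x R with hxR | hRx
    · rw [max_eq_left hxR, mul_comm]
      gcongr
      exact min_le_right _ _
    · rw [max_eq_right hRx]
      calc min 1 (x - 1) * x ≤ 1 * x := by gcongr; exact min_le_left _ _
        _ ≤ R * (x - 1) := by nlinarith
  refine le_min ?_ ?_
  · exact mul_le_one₀ (inv_le_one_of_one_le₀ (by linarith)) (by positivity) (min_le_left _ _)
  · rw [le_div_iff₀ ht]
    calc R⁻¹ * min 1 (x - 1) * t ≤ R⁻¹ * min 1 (x - 1) * (max R x * y) := by gcongr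
      _ = R⁻¹ * min 1 (x - 1) * max R x * y := by ring
      _ ≤ (x - 1) * y := by gcongr
      _ ≤ 2 * (x - 1) * (y - 1) := by nlinarith

end Kernels

section EscapeProfile

/-- The order of magnitude of the probability that planar Brownian motion started at distance `x`
from the origin reaches distance `s` before hitting the unit disc. Shifting `s` to `1 + s` keeps
the denominator positive for every `s > 0`. -/
noncomputable def escapeProfile (s x : ℝ) : ℝ := min 1 (log x / log (1 + s))

variable {r s x : ℝ}

theorem escapeProfile_pos (hs : 0 < s) (hx : 1 < x) : 0 < escapeProfile s x :=
  lt_min one_pos (div_pos (log_pos hx) (log_pos (by linarith)))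

theorem escapeProfile_anti (hr : 0 < r) (hrs : r ≤ s) (hx : 1 < x) :
    escapeProfile s x ≤ escapeProfile r x := by
  have hlog : 0 < log (1 + r) := log_pos (by linarith)
  have hlogx : 0 ≤ log x := log_nonneg hx.le
  unfold escapeProfile
  gcongr

theorem escapeProfile_sqrt_le (hs : 0 < s) (hx : 1 < x) :
    escapeProfile (√s) x ≤ 2 * escapeProfile s x := by
  have hlogx : 0 ≤ log x := log_nonneg hx.le
  have hlogs : 0 < log (1 + s) := log_pos (by linarith)
  have hsqrt : 0 < √s := sqrt_pos.2 hs
  have hlog : log (1 + s) ≤ 2 * log (1 + √s) := by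
    rw [← log_rpow (by positivity), rpow_two]
    exact log_le_log (by positivity) (by nlinarith [sq_sqrt hs.le])
  rw [escapeProfile, escapeProfile, mul_min_of_nonneg _ _ zero_le_two]
  refine min_le_min (by norm_num) ?_
  rw [← mul_div_assoc, div_le_div_iff₀ (log_pos (by linarith)) hlogs]
  nlinarith

theorem one_fourth_le_escapeProfile (hs : 2 ≤ s) (hsx : s ≤ x ^ 2) :
    1 / 4 ≤ escapeProfile s x := by
  have hlog : log (1 + s) ≤ 4 * log x := by
    have h := log_le_log (by linarith) (show 1 + s ≤ x ^ 4 by nlinarith)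
    rwa [log_pow] at h
  refine le_min (by norm_num) ?_
  rw [le_div_iff₀ (log_pos (by linarith))]
  linarith

theorem escapeProfile_le_min_one_sub_one (hs : 2 ≤ s) (hx : 1 < x) :
    escapeProfile s x ≤ min 1 (x - 1) := by
  have hlogs : 1 ≤ log (1 + s) := by
    rw [le_log_iff_exp_le (by linarith)]
    linarith [exp_one_lt_d9]
  refine min_le_min le_rfl ?_
  exact (div_le_self (log_nonneg hx.le) hlogs).trans (log_le_sub_one_of_pos (by linarith))

theorem sub_one_mul_exp_neg_le_escapeProfile (hx : 1 < x) (hxs : x ≤ s) :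
    (x - 1) * exp (-(2 * s)) ≤ escapeProfile s x := by
  have hs : 0 < s := by linarith
  have hlogx : 0 < log x := log_pos hx
  have hlogs : 0 < log (1 + s) := log_pos (by linarith)
  have hexp : s * s ≤ exp (2 * s) := by
    rw [two_mul, exp_add]
    have : s ≤ exp s := by linarith [add_one_le_exp s]
    gcongr
  have hx_log : x - 1 ≤ s * log x := by
    have h := mul_le_mul_of_nonneg_left (one_sub_inv_le_log_of_pos (zero_lt_one.trans hx))
      (zero_le_one.trans hx.le)
    rw [mul_sub, mul_inv_cancel₀ (by positivity), mul_one] at h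
    exact h.trans (by gcongr)
  have hlog_le : log (1 + s) ≤ s := by linarith [log_le_sub_one_of_pos (show 0 < 1 + s by linarith)]
  rw [exp_neg, ← div_eq_mul_inv]
  refine le_min ?_ ?_
  · rw [div_le_one (exp_pos _)]
    linarith [add_one_le_exp (2 * s)]
  · rw [div_le_div_iff₀ (exp_pos _) hlogs]
    calc (x - 1) * log (1 + s) ≤ s * log x * s := by gcongr
      _ = log x * (s * s) := by ring
      _ ≤ log x * exp (2 * s) := by gcongr

end EscapeProfile

section BridgeFromAnnulus

variable {a r t w z : ℝ}

theorem le_inv_sqrt_of_mem_Icc (ha : 0 < a) (hr : 0 < r) (hw : 0 < w) (hrw : r * w = t)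
    (hrt : r ^ 2 < t) (hz : z ∈ Set.Icc (a * r) (r / a)) :
    (√(2 * π / a))⁻¹ * t⁻¹ ≤ (√(2 * π * (t - r ^ 2) * (z * w)))⁻¹ := by
  have hz0 : 0 < z := (mul_pos ha hr).trans_le hz.1
  have ht : 0 < t := hrw ▸ mul_pos hr hw
  rw [← mul_inv]
  refine inv_anti₀ (by positivity) (sqrt_le_iff.2 ⟨by positivity, ?_⟩)
  calc 2 * π * (t - r ^ 2) * (z * w) ≤ 2 * π * t * (r / a * w) := by
        gcongr
        · exact sub_le_self t (sq_nonneg r)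
        · exact hz.2
    _ = 2 * π / a * (t * (r * w)) := by ring
    _ = (√(2 * π / a) * t) ^ 2 := by
        rw [hrw, mul_pow, sq_sqrt (by positivity), sq t]

theorem exp_neg_sq_div_le_of_mem_Icc (ha : 0 < a) (hr : 0 < r) (hw : 0 < w) (hrw : r * w = t)
    (hrt : 4 * r ^ 2 ≤ t) (hz : z ∈ Set.Icc (a * r) (r / a)) :
    exp (-(1 / (6 * a ^ 2) + 2 / 3)) * exp (-w ^ 2 / (2 * t)) ≤
      exp (-(z - w) ^ 2 / (2 * (t - r ^ 2))) := by
  have hz0 : 0 < z := (mul_pos ha hr).trans_le hz.1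
  have hs : 0 < t - r ^ 2 := by nlinarith
  have ht : 0 < t := hrw ▸ mul_pos hr hw
  -- Since `r w = t`, spending time `r²` before the bridge costs only `t / (2 (t - r²))`.
  have hexpand : -(z - w) ^ 2 / (2 * (t - r ^ 2)) =
      -w ^ 2 / (2 * t) - (z ^ 2 - 2 * (z * w) + t) / (2 * (t - r ^ 2)) := by
    have hw2 : r ^ 2 * w ^ 2 = t ^ 2 := by rw [← hrw]; ring
    field_simp
    linear_combination -hw2
  have hz2 : z ^ 2 ≤ t / (4 * a ^ 2) := by
    calc z ^ 2 ≤ (r / a) ^ 2 := by gcongr; exact hz.2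
      _ ≤ t / (4 * a ^ 2) := by
        rw [div_pow, div_le_div_iff₀ (by positivity) (by positivity)]
        nlinarith [sq_pos_of_pos ha]
  have hcost : (z ^ 2 - 2 * (z * w) + t) / (2 * (t - r ^ 2)) ≤ 1 / (6 * a ^ 2) + 2 / 3 := by
    calc (z ^ 2 - 2 * (z * w) + t) / (2 * (t - r ^ 2))
        ≤ (t / (4 * a ^ 2) + t) / (3 / 2 * t) := by
          gcongr ?_ / ?_
          · linarith [mul_pos hz0 hw]
          · linarith
      _ = 1 / (6 * a ^ 2) + 2 / 3 := by field_simp; ring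
  rw [← exp_add, exp_le_exp, hexpand]
  linarith

theorem one_sub_exp_le_of_mul_le (ha : 0 < a) (hw : 2 ≤ w) (hrw : r * w = t)
    (hrt : r ^ 2 < t) (hz2 : 2 ≤ z) (hz : a * r ≤ z) :
    1 - exp (-(a / 2)) ≤ 1 - exp (-(2 * (z - 1) * (w - 1) / (t - r ^ 2))) := by
  have hexponent : a / 2 ≤ 2 * (z - 1) * (w - 1) / (t - r ^ 2) := by
    rw [le_div_iff₀ (sub_pos.2 hrt)]
    calc a / 2 * (t - r ^ 2) ≤ a / 2 * t := by
          gcongr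
          exact sub_le_self t (sq_nonneg r)
      _ = a * r * w / 2 := by rw [← hrw]; ring
      _ ≤ z * w / 2 := by gcongr
      _ ≤ 2 * (z - 1) * (w - 1) := by nlinarith
  gcongr

theorem exists_le_sqrt_mul_hker_of_mem_Icc (ha : 0 < a) :
    ∃ c : ℝ, 0 < c ∧ ∀ r t w z : ℝ, 0 < r → 2 ≤ w → 2 ≤ a * r → r * w = t → 4 * r ^ 2 ≤ t →
      z ∈ Set.Icc (a * r) (r / a) →
      c * (t⁻¹ * exp (-w ^ 2 / (2 * t))) ≤ √(z * w) * hker (t - r ^ 2) z w := by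
  have hrefl : 0 < 1 - exp (-(a / 2)) := by
    rw [sub_pos, exp_lt_one_iff]
    linarith
  refine ⟨(√(2 * π / a))⁻¹ * exp (-(1 / (6 * a ^ 2) + 2 / 3)) * (1 - exp (-(a / 2))),
    by positivity, fun r t w z hr hw har hrw hrt hz ↦ ?_⟩
  have hw0 : 0 < w := by linarith
  have ht : r ^ 2 < t := by nlinarith
  rw [sqrt_mul_hker_eq (by linarith)]
  calc (√(2 * π / a))⁻¹ * exp (-(1 / (6 * a ^ 2) + 2 / 3)) * (1 - exp (-(a / 2))) *
        (t⁻¹ * exp (-w ^ 2 / (2 * t)))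
      = (√(2 * π / a))⁻¹ * t⁻¹ * (exp (-(1 / (6 * a ^ 2) + 2 / 3)) * exp (-w ^ 2 / (2 * t))) *
          (1 - exp (-(a / 2))) := by ring
    _ ≤ _ := by
        gcongr ?_ * ?_ * ?_
        · exact le_inv_sqrt_of_mem_Icc ha hr hw0 hrw ht hz
        · exact exp_neg_sq_div_le_of_mem_Icc ha hr hw0 hrw hrt hz
        · exact one_sub_exp_le_of_mul_le ha hw hrw ht (har.trans hz.1) hz.1

end BridgeFromAnnulus

/-- A kernel on `(1, ∞)`, with respect to `y dy`, sharing with the Dirichlet heat kernel of the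
Bessel operator the properties behind its off-diagonal lower bound: domination by the free kernel
`pk`, comparison with the half-line kernel `hker`, the Chapman–Kolmogorov equation, and a total
mass of the order of `escapeProfile (√t) x`. -/
structure KilledBesselKernel (p₁ : ℝ → ℝ → ℝ → ℝ) : Prop where
  le_pk : ∀ ⦃t x y : ℝ⦄, 0 < t → 1 < x → 1 < y → p₁ t x y ≤ pk t x y
  hker_le : ∀ ⦃t x y : ℝ⦄, 0 < t → 1 < x → 1 < y → √(x * y) * hker t x y ≤ p₁ t x y
  le_exp_mul_hker : ∀ ⦃t x y : ℝ⦄, 0 < t → 1 < x → 1 < y →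
    p₁ t x y ≤ exp (t / 8) * (√(x * y) * hker t x y)
  chapman_kolmogorov : ∀ ⦃t s x y : ℝ⦄, 0 < t → 0 < s → 1 < x → 1 < y →
    p₁ (t + s) x y = ∫ z in Set.Ioi 1, p₁ t x z * p₁ s z y * z
  survival : ∃ c C : ℝ, 0 < c ∧ 0 < C ∧ ∀ ⦃t x : ℝ⦄, 0 < t → 1 < x →
    c * escapeProfile (√t) x ≤ (∫ y in Set.Ioi 1, p₁ t x y * y) ∧
    (∫ y in Set.Ioi 1, p₁ t x y * y) ≤ C * escapeProfile (√t) x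

namespace KilledBesselKernel

theorem of_besselHK {p₁ : ℝ → ℝ → ℝ → ℝ} {q : ℝ → ℝ → ℝ} (H : BesselHK p₁ q) :
    KilledBesselKernel p₁ where
  le_pk t x y ht hx hy := by
    rw [H.hunt ht hx hy]
    exact sub_le_self _ <| setIntegral_nonneg measurableSet_Ioo fun u hu ↦
      mul_nonneg (H.q_nonneg hx hu.1) (pk_nonneg (sub_pos.2 hu.2) 1 y)
  hker_le t x y ht hx hy := (H.ac ht hx hy).1
  le_exp_mul_hker t x y ht hx hy := by rw [← mul_assoc]; exact (H.ac ht hx hy).2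
  chapman_kolmogorov := H.ck
  survival := by
    obtain ⟨c, C, hc, hcC, hsurv⟩ := H.surv
    refine ⟨c, C, hc, hc.trans_le hcC, fun t x ht hx ↦ ?_⟩
    rw [H.mass ht hx]
    exact hsurv ht hx

variable {p₁ : ℝ → ℝ → ℝ → ℝ} {r s t w x y z : ℝ}

theorem pos (H : KilledBesselKernel p₁) (ht : 0 < t) (hx : 1 < x) (hy : 1 < y) : 0 < p₁ t x y :=
  (sqrt_mul_hker_pos ht hx hy).trans_le (H.hker_le ht hx hy)

theorem kernel_mul_nonneg (H : KilledBesselKernel p₁) (ht : 0 < t) (hx : 1 < x) (hy : 1 < y) :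
    0 ≤ p₁ t x y * y :=
  mul_nonneg (H.pos ht hx hy).le (zero_le_one.trans hy.le)

theorem integrableOn_kernel_mul (H : KilledBesselKernel p₁) (ht : 0 < t) (hx : 1 < x) :
    IntegrableOn (fun y ↦ p₁ t x y * y) (Set.Ioi 1) := by
  obtain ⟨c, _, hc, _, hsurv⟩ := H.survival
  -- A nonzero Bochner integral forces integrability.
  have hmass := (mul_pos hc (escapeProfile_pos (sqrt_pos.2 ht) hx)).trans_le (hsurv ht hx).1
  exact not_imp_comm.1 integral_undef hmass.ne'

theorem integrableOn_chapman_kolmogorov (H : KilledBesselKernel p₁) (ht : 0 < t) (hs : 0 < s)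
    (hx : 1 < x) (hy : 1 < y) :
    IntegrableOn (fun z ↦ p₁ t x z * p₁ s z y * z) (Set.Ioi 1) := by
  have hpos := H.pos (add_pos ht hs) hx hy
  rw [H.chapman_kolmogorov ht hs hx hy] at hpos
  exact not_imp_comm.1 integral_undef hpos.ne'

theorem kernel_mul_exp_sq_le_of_far (H : KilledBesselKernel p₁) (hr : 8 ≤ r) (hx : 1 < x)
    (hxr : x ^ 2 ≤ r) (hy : 32 * r < y) :
    p₁ r x y * y * exp (y ^ 2 / (2 * r ^ 2)) ≤
      4 * exp (1 / 2) * escapeProfile r x * exp (-y) := by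
  have hy1 : 1 < y := by linarith
  have hkernel : p₁ r x y ≤ exp (r / 8) * (exp (-(x - y) ^ 2 / (2 * r)) * (2 * (x - 1) * y)) :=
    (H.le_exp_mul_hker (by linarith) hx hy1).trans
      (mul_le_mul_of_nonneg_left (sqrt_mul_hker_le (by linarith) hx hy1) (exp_nonneg _))
  have hexp : exp (r / 8 + -(x - y) ^ 2 / (2 * r) + y ^ 2 / (2 * r ^ 2)) ≤
      exp (1 / 2 + (-(2 * r) + (-y + -y))) := by
    rw [exp_le_exp]
    linarith [far_exponent_le hr hxr hy.le]
  have hy_sq : y ^ 2 ≤ 2 * exp y := by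
    linarith [quadratic_le_exp_of_nonneg (show 0 ≤ y by linarith)]
  have hprofile : (x - 1) * exp (-(2 * r)) ≤ escapeProfile r x :=
    sub_one_mul_exp_neg_le_escapeProfile hx (by nlinarith)
  calc p₁ r x y * y * exp (y ^ 2 / (2 * r ^ 2))
      ≤ exp (r / 8) * (exp (-(x - y) ^ 2 / (2 * r)) * (2 * (x - 1) * y)) * y *
          exp (y ^ 2 / (2 * r ^ 2)) := by gcongr
    _ = 2 * (x - 1) * y ^ 2 *
          exp (r / 8 + -(x - y) ^ 2 / (2 * r) + y ^ 2 / (2 * r ^ 2)) := by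
        rw [exp_add, exp_add]; ring
    _ ≤ 2 * (x - 1) * (2 * exp y) * exp (1 / 2 + (-(2 * r) + (-y + -y))) := by gcongr
    _ = 4 * exp (1 / 2) * ((x - 1) * exp (-(2 * r))) * exp (-y) := by
        simp only [exp_add, exp_neg]; field_simp; ring
    _ ≤ _ := by gcongr

theorem kernel_mul_exp_sq_le (H : KilledBesselKernel p₁) (hr : 8 ≤ r) (hx : 1 < x)
    (hxr : x ^ 2 ≤ r) (hy : 1 < y) :
    p₁ r x y * y * exp (y ^ 2 / (2 * r ^ 2)) ≤
      exp 512 * (p₁ r x y * y) + 4 * exp (1 / 2) * escapeProfile r x * exp (-y) := by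
  have hr0 : 0 < r := by linarith
  have hp : 0 ≤ p₁ r x y * y := H.kernel_mul_nonneg hr0 hx hy
  have hprofile : 0 < escapeProfile r x := escapeProfile_pos hr0 hx
  rcases lt_or_ge (32 * r) y with hfar | hnear
  · exact (H.kernel_mul_exp_sq_le_of_far hr hx hxr hfar).trans
      (le_add_of_nonneg_left (by positivity))
  · have hexp : exp (y ^ 2 / (2 * r ^ 2)) ≤ exp 512 := by
      rw [exp_le_exp, div_le_iff₀ (by positivity)]
      nlinarith
    calc p₁ r x y * y * exp (y ^ 2 / (2 * r ^ 2)) ≤ p₁ r x y * y * exp 512 := by gcongr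
      _ = exp 512 * (p₁ r x y * y) := mul_comm _ _
      _ ≤ _ := le_add_of_nonneg_right (by positivity)

theorem integrableOn_kernel_mul_exp_sq (H : KilledBesselKernel p₁) (hr : 8 ≤ r) (hx : 1 < x)
    (hxr : x ^ 2 ≤ r) :
    IntegrableOn (fun y ↦ p₁ r x y * y * exp (y ^ 2 / (2 * r ^ 2))) (Set.Ioi 1) := by
  have hr0 : 0 < r := by linarith
  have hp := H.integrableOn_kernel_mul hr0 hx
  have hexp : IntegrableOn (fun y ↦ exp (-y)) (Set.Ioi 1) := integrableOn_exp_neg_Ioi 1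
  refine ((hp.const_mul (exp 512)).add (hexp.const_mul (4 * exp (1 / 2) * escapeProfile r x))).mono'
    (hp.1.mul (by fun_prop)) ?_
  filter_upwards [ae_restrict_mem measurableSet_Ioi] with y hy
  rw [norm_of_nonneg (mul_nonneg (H.kernel_mul_nonneg hr0 hx hy) (exp_nonneg _))]
  exact H.kernel_mul_exp_sq_le hr hx hxr hy

theorem exists_exp_sq_moment_le (H : KilledBesselKernel p₁) :
    ∃ M : ℝ, 0 < M ∧ ∀ r x : ℝ, 8 ≤ r → 1 < x → x ^ 2 ≤ r →
      ∫ y in Set.Ioi 1, p₁ r x y * y * exp (y ^ 2 / (2 * r ^ 2)) ≤ M * escapeProfile r x := by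
  obtain ⟨_, C, _, hC, hsurv⟩ := H.survival
  refine ⟨exp 512 * (C * 2) + 4 * exp (1 / 2), by positivity, fun r x hr hx hxr ↦ ?_⟩
  have hr0 : 0 < r := by linarith
  have hprofile : 0 < escapeProfile r x := escapeProfile_pos hr0 hx
  have hp := (H.integrableOn_kernel_mul hr0 hx).const_mul (exp 512)
  have hexp := (integrableOn_exp_neg_Ioi 1).const_mul (4 * exp (1 / 2) * escapeProfile r x)
  calc ∫ y in Set.Ioi 1, p₁ r x y * y * exp (y ^ 2 / (2 * r ^ 2))
      ≤ ∫ y in Set.Ioi 1,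
          (exp 512 * (p₁ r x y * y) + 4 * exp (1 / 2) * escapeProfile r x * exp (-y)) :=
        setIntegral_mono_on (H.integrableOn_kernel_mul_exp_sq hr hx hxr) (hp.add hexp)
          measurableSet_Ioi fun y hy ↦ H.kernel_mul_exp_sq_le hr hx hxr hy
    _ = exp 512 * (∫ y in Set.Ioi 1, p₁ r x y * y) +
          4 * exp (1 / 2) * escapeProfile r x * exp (-1) := by
        rw [integral_add hp hexp, integral_const_mul, integral_const_mul, integral_exp_neg_Ioi]
    _ ≤ exp 512 * (C * (2 * escapeProfile r x)) +
          4 * exp (1 / 2) * escapeProfile r x * 1 := by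
        gcongr
        · exact (hsurv hr0 hx).2.trans
            (mul_le_mul_of_nonneg_left (escapeProfile_sqrt_le hr0 hx) hC.le)
        · exact exp_le_one_iff.2 (by norm_num)
    _ = _ := by ring

theorem le_mul_exp_neg_sq_of_le_sq (H : KilledBesselKernel p₁) (hr : 2 ≤ r) (hx : 1 < x)
    (hxr : x ≤ r) (hrx : r ≤ x ^ 2) (hz : 1 < z) :
    p₁ (r ^ 2) x z ≤
      8 * exp (1 / 2) * (escapeProfile r x / r ^ 2) * exp (-z ^ 2 / (4 * r ^ 2)) := by
  have hexp : exp (x ^ 2 / (2 * r ^ 2)) ≤ exp (1 / 2) := by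
    rw [exp_le_exp, div_le_div_iff₀ (by positivity) two_pos]
    nlinarith
  calc p₁ (r ^ 2) x z
      ≤ 2 / r ^ 2 * exp (-z ^ 2 / (4 * r ^ 2)) * exp (x ^ 2 / (2 * r ^ 2)) :=
        (H.le_pk (by positivity) hx hz).trans
          (pk_le_mul_exp_sq (by positivity) le_rfl (by nlinarith) (by linarith) (by linarith))
    _ ≤ 2 / r ^ 2 * exp (-z ^ 2 / (4 * r ^ 2)) * exp (1 / 2) := by gcongr
    _ = 8 * exp (1 / 2) * ((1 / 4) / r ^ 2) * exp (-z ^ 2 / (4 * r ^ 2)) := by ring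
    _ ≤ _ := by gcongr; exact one_fourth_le_escapeProfile hr hrx

theorem le_exp_neg_sq_mul_exp_sq_moment (H : KilledBesselKernel p₁) (hr : 8 ≤ r) (hx : 1 < x)
    (hxr : x ^ 2 ≤ r) (hz : 1 < z) :
    p₁ (r ^ 2) x z ≤ 2 / r ^ 2 * exp (-z ^ 2 / (4 * r ^ 2)) *
      ∫ y in Set.Ioi 1, p₁ r x y * y * exp (y ^ 2 / (2 * r ^ 2)) := by
  have hr0 : 0 < r := by linarith
  have hrest : 0 < r ^ 2 - r := by nlinarith
  have hpk : ∀ y ∈ Set.Ioi (1 : ℝ), p₁ (r ^ 2 - r) y z ≤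
      2 / r ^ 2 * exp (-z ^ 2 / (4 * r ^ 2)) * exp (y ^ 2 / (2 * r ^ 2)) := fun y hy ↦
    (H.le_pk hrest hy hz).trans <| pk_le_mul_exp_sq hrest (by linarith) (by nlinarith)
      (zero_le_one.trans (le_of_lt hy)) (by linarith)
  calc p₁ (r ^ 2) x z
      = ∫ y in Set.Ioi 1, p₁ r x y * p₁ (r ^ 2 - r) y z * y := by
        rw [← H.chapman_kolmogorov hr0 hrest hx hz, add_sub_cancel]
    _ ≤ ∫ y in Set.Ioi 1, 2 / r ^ 2 * exp (-z ^ 2 / (4 * r ^ 2)) *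
          (p₁ r x y * y * exp (y ^ 2 / (2 * r ^ 2))) := by
        refine setIntegral_mono_on (H.integrableOn_chapman_kolmogorov hr0 hrest hx hz)
          ((H.integrableOn_kernel_mul_exp_sq hr hx hxr).const_mul _) measurableSet_Ioi
          fun y hy ↦ ?_
        linarith [mul_le_mul_of_nonneg_left (hpk y hy) (H.kernel_mul_nonneg hr0 hx hy)]
    _ = _ := integral_const_mul _ _

theorem exists_le_mul_exp_neg_sq (H : KilledBesselKernel p₁) :
    ∃ K : ℝ, 0 < K ∧ ∀ r x z : ℝ, 8 ≤ r → 1 < x → x ≤ r → 1 < z →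
      p₁ (r ^ 2) x z ≤ K * (escapeProfile r x / r ^ 2) * exp (-z ^ 2 / (4 * r ^ 2)) := by
  obtain ⟨M, hM, hmoment⟩ := H.exists_exp_sq_moment_le
  refine ⟨8 * exp (1 / 2) + 2 * M, by positivity, fun r x z hr hx hxr hz ↦ ?_⟩
  have hprofile : 0 < escapeProfile r x := escapeProfile_pos (by linarith) hx
  rcases le_total r (x ^ 2) with hrx | hxr'
  · refine (H.le_mul_exp_neg_sq_of_le_sq (by linarith) hx hxr hrx hz).trans ?_
    gcongr
    exact le_add_of_nonneg_right (by positivity)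
  · calc p₁ (r ^ 2) x z
        ≤ 2 / r ^ 2 * exp (-z ^ 2 / (4 * r ^ 2)) * (M * escapeProfile r x) :=
          (H.le_exp_neg_sq_mul_exp_sq_moment hr hx hxr' hz).trans
            (by gcongr; exact hmoment r x hr hx hxr')
      _ = 2 * M * (escapeProfile r x / r ^ 2) * exp (-z ^ 2 / (4 * r ^ 2)) := by ring
      _ ≤ _ := by
        gcongr
        exact le_add_of_nonneg_left (by positivity)

theorem exists_setIntegral_sdiff_Icc_le (H : KilledBesselKernel p₁) :
    ∃ K : ℝ, 0 < K ∧ ∀ a r x : ℝ, 0 < a → 8 ≤ r → 1 < x → x ≤ r →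
      ∫ z in Set.Ioi 1 \ Set.Icc (a * r) (r / a), p₁ (r ^ 2) x z * z ≤
        K * a * escapeProfile r x := by
  obtain ⟨K, hK, hupper⟩ := H.exists_le_mul_exp_neg_sq
  refine ⟨24 * K, by positivity, fun a r x ha hr hx hxr ↦ ?_⟩
  have hr0 : 0 < r := by linarith
  have hprofile : 0 < escapeProfile r x := escapeProfile_pos hr0 hx
  have hgauss : Integrable fun z ↦ z * exp (-z ^ 2 / (4 * r ^ 2)) := by
    convert integrable_mul_exp_neg_mul_sq (b := 1 / (4 * r ^ 2)) (by positivity) using 4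
    ring
  calc ∫ z in Set.Ioi 1 \ Set.Icc (a * r) (r / a), p₁ (r ^ 2) x z * z
      ≤ ∫ z in Set.Ioi 1 \ Set.Icc (a * r) (r / a),
          K * (escapeProfile r x / r ^ 2) * (z * exp (-z ^ 2 / (4 * r ^ 2))) := by
        refine setIntegral_mono_of_nonneg
          (fun z hz ↦ H.kernel_mul_nonneg (pow_pos hr0 2) hx hz.1) (fun z hz ↦ ?_)
          (hgauss.const_mul _).integrableOn
        have hz : 1 < z := hz.1
        linarith [mul_le_mul_of_nonneg_right (hupper r x z hr hx hxr hz) (zero_le_one.trans hz.le)]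
    _ = K * (escapeProfile r x / r ^ 2) *
          ∫ z in Set.Ioi 1 \ Set.Icc (a * r) (r / a), z * exp (-z ^ 2 / (4 * r ^ 2)) :=
        integral_const_mul _ _
    _ ≤ K * (escapeProfile r x / r ^ 2) * (24 * a * r ^ 2) := by
        gcongr
        refine (setIntegral_mono_set hgauss.integrableOn ?_ ?_).trans
          (setIntegral_mul_exp_neg_sq_sdiff_Icc_le ha hr0)
        · filter_upwards [ae_restrict_mem (measurableSet_Ioi.diff measurableSet_Icc)] with z hz
          exact mul_nonneg (le_of_lt hz.1) (exp_nonneg _)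
        · exact (Set.sdiff_subset_sdiff_left (Set.Ioi_subset_Ioi zero_le_one)).eventuallyLE
    _ = _ := by field_simp

theorem exists_le_setIntegral_Icc (H : KilledBesselKernel p₁) :
    ∃ a c : ℝ, 0 < a ∧ 0 < c ∧ ∀ r x : ℝ, 8 ≤ r → 1 < a * r → 1 < x → x ≤ r →
      c * escapeProfile r x ≤ ∫ z in Set.Icc (a * r) (r / a), p₁ (r ^ 2) x z * z := by
  obtain ⟨c, _, hc, _, hsurv⟩ := H.survival
  obtain ⟨K, hK, houtside⟩ := H.exists_setIntegral_sdiff_Icc_le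
  refine ⟨c / (2 * K), c / 2, by positivity, by positivity, fun r x hr har hx hxr ↦ ?_⟩
  set a := c / (2 * K) with ha
  have hr2 : 0 < r ^ 2 := by positivity
  have hmass : c * escapeProfile r x ≤ ∫ z in Set.Ioi 1, p₁ (r ^ 2) x z * z := by
    have h := (hsurv hr2 hx).1
    rwa [sqrt_sq (by linarith)] at h
  have hloss := houtside a r x (by positivity) hr hx hxr
  have hKa : K * a = c / 2 := by rw [ha]; field_simp
  rw [setIntegral_sdiff measurableSet_Icc (H.integrableOn_kernel_mul hr2 hx)
    (fun z hz ↦ har.trans_le hz.1), hKa] at hloss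
  linarith

theorem mul_setIntegral_le (H : KilledBesselKernel p₁) {b : ℝ} {S : Set ℝ} (hs : 0 < s)
    (hst : s < t) (hx : 1 < x) (hw : 1 < w) (hS : MeasurableSet S) (hS1 : S ⊆ Set.Ioi 1)
    (hb : ∀ z ∈ S, b ≤ p₁ (t - s) z w) :
    b * ∫ z in S, p₁ s x z * z ≤ p₁ t x w := by
  have hts : 0 < t - s := sub_pos.2 hst
  have hint := H.integrableOn_chapman_kolmogorov hs hts hx hw
  calc b * ∫ z in S, p₁ s x z * z = ∫ z in S, b * (p₁ s x z * z) := (integral_const_mul _ _).symm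
    _ ≤ ∫ z in S, p₁ s x z * p₁ (t - s) z w * z := by
        refine setIntegral_mono_on (((H.integrableOn_kernel_mul hs hx).mono_set hS1).const_mul _)
          (hint.mono_set hS1) hS fun z hz ↦ ?_
        linarith [mul_le_mul_of_nonneg_right (hb z hz) (H.kernel_mul_nonneg hs hx (hS1 hz))]
    _ ≤ ∫ z in Set.Ioi 1, p₁ s x z * p₁ (t - s) z w * z := by
        refine setIntegral_mono_set hint ?_ hS1.eventuallyLE
        filter_upwards [ae_restrict_mem measurableSet_Ioi] with z hz
        exact mul_nonneg (mul_nonneg (H.pos hs hx hz).le (H.pos hts hz hw).le)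
          (zero_le_one.trans (le_of_lt hz))
    _ = p₁ t x w := by rw [← H.chapman_kolmogorov hs hts hx hw, add_sub_cancel]

theorem exists_escapeProfile_mul_exp_le (H : KilledBesselKernel p₁) :
    ∃ R c : ℝ, 2 ≤ R ∧ 0 < c ∧ ∀ r t x w : ℝ, R ≤ r → 1 < x → x ≤ r → r * w = t → 4 * r ^ 2 ≤ t →
      c * escapeProfile r x * (t⁻¹ * exp (-w ^ 2 / (2 * t))) ≤ p₁ t x w := by
  obtain ⟨a, c₁, ha, hc₁, hannulus⟩ := H.exists_le_setIntegral_Icc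
  obtain ⟨c₂, hc₂, hbridge⟩ := exists_le_sqrt_mul_hker_of_mem_Icc ha
  refine ⟨max 8 (2 / a), c₁ * c₂, (by norm_num : (2 : ℝ) ≤ 8).trans (le_max_left _ _),
    by positivity, fun r t x w hRr hx hxr hrw hrt ↦ ?_⟩
  obtain ⟨hr, har⟩ := max_le_iff.1 hRr
  rw [div_le_iff₀' ha] at har
  have hr0 : 0 < r := by linarith
  have ht : r ^ 2 < t := by nlinarith
  have hw : 2 ≤ w := by nlinarith
  have hsub : Set.Icc (a * r) (r / a) ⊆ Set.Ioi 1 := fun z hz ↦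
    (one_lt_two.trans_le har).trans_le hz.1
  calc c₁ * c₂ * escapeProfile r x * (t⁻¹ * exp (-w ^ 2 / (2 * t)))
      = c₂ * (t⁻¹ * exp (-w ^ 2 / (2 * t))) * (c₁ * escapeProfile r x) := by ring
    _ ≤ c₂ * (t⁻¹ * exp (-w ^ 2 / (2 * t))) *
          ∫ z in Set.Icc (a * r) (r / a), p₁ (r ^ 2) x z * z := by
        have ht0 : 0 < t := (sq_nonneg r).trans_lt ht
        gcongr
        exact hannulus r x hr (by linarith) hx hxr
    _ ≤ p₁ t x w :=
        H.mul_setIntegral_le (pow_pos hr0 2) ht hx (by linarith) measurableSet_Icc hsub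
          fun z hz ↦ (hbridge r t w z hr0 hw har hrw hrt hz).trans
            (H.hker_le (sub_pos.2 ht) (hsub hz) (by linarith))

theorem exists_escapeProfile_mul_pk_le (H : KilledBesselKernel p₁) :
    ∃ R c : ℝ, 2 ≤ R ∧ 0 < c ∧ ∀ t x w : ℝ, 0 < t → 1 < x → 2 * √t ≤ w → max R x * w ≤ t →
      c * escapeProfile (t / w) x * pk t x w ≤ p₁ t x w := by
  obtain ⟨R, c, hR, hc, hle⟩ := H.exists_escapeProfile_mul_exp_le
  refine ⟨R, c * exp (-1), hR, by positivity, fun t x w ht hx hw htw ↦ ?_⟩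
  have hw0 : 0 < w := (by positivity : 0 < 2 * √t).trans_le hw
  have hprofile : 0 < escapeProfile (t / w) x := escapeProfile_pos (by positivity) hx
  obtain ⟨hRr, hxr⟩ := max_le_iff.1 ((le_div_iff₀ hw0).2 htw)
  have hrt : 4 * (t / w) ^ 2 ≤ t := by
    have hw_sq : 4 * t ≤ w ^ 2 := by nlinarith [sq_sqrt ht.le, sqrt_nonneg t]
    rw [div_pow, mul_div_assoc', div_le_iff₀ (by positivity)]
    nlinarith
  calc c * exp (-1) * escapeProfile (t / w) x * pk t x w
      ≤ c * exp (-1) * escapeProfile (t / w) x * (exp 1 * (t⁻¹ * exp (-w ^ 2 / (2 * t)))) := by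
        gcongr
        exact pk_le_exp_one_mul_of_mul_le ht (by linarith) hw0.le ((le_div_iff₀ hw0).1 hxr)
    _ = c * escapeProfile (t / w) x * (t⁻¹ * exp (-w ^ 2 / (2 * t))) := by
        rw [exp_neg]; field_simp
    _ ≤ p₁ t x w := hle (t / w) t x w hRr hx hxr (div_mul_cancel₀ t hw0.ne') hrt

theorem min_one_sub_one_mul_pk_le (H : KilledBesselKernel p₁) {R : ℝ} (hR : 2 ≤ R) (ht : 0 < t)
    (hx : 1 < x) (hw : 2 ≤ w) (htw : t ≤ max R x * w) :
    (√(2 * π))⁻¹ * (R⁻¹ * min 1 (x - 1)) * pk t x w ≤ p₁ t x w := by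
  calc (√(2 * π))⁻¹ * (R⁻¹ * min 1 (x - 1)) * pk t x w
      ≤ (√(2 * π))⁻¹ * min 1 (2 * (x - 1) * (w - 1) / t) * pk t x w := by
        gcongr
        · exact pk_nonneg ht x w
        · exact inv_mul_min_one_sub_one_le_min_one_reflection hR ht hx hw htw
    _ ≤ √(x * w) * hker t x w := min_one_reflection_mul_pk_le ht hx (by linarith)
    _ ≤ p₁ t x w := H.hker_le ht hx (by linarith)

end KilledBesselKernel

theorem bessel_heat_kernel_lower_bound_midstep_general {p₁ : ℝ → ℝ → ℝ → ℝ}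
    (H : KilledBesselKernel p₁) :
    ∃ c : ℝ, 0 < c ∧ ∀ t x w : ℝ, 1 ≤ t → 1 < x → 2 * √t ≤ w →
      c * min 1 (log x / log (3 * t)) * pk t x w ≤ p₁ t x w := by
  obtain ⟨R, c, hR, hc, hfar⟩ := H.exists_escapeProfile_mul_pk_le
  refine ⟨min c ((√(2 * π))⁻¹ * R⁻¹), by positivity, fun t x w ht hx hw ↦ ?_⟩
  have hw2 : 2 ≤ w := by linarith [one_le_sqrt.2 ht]
  have hprofile : min 1 (log x / log (3 * t)) = escapeProfile (3 * t - 1) x := by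
    rw [escapeProfile, add_sub_cancel]
  have hpk : 0 ≤ pk t x w := pk_nonneg (by linarith) x w
  have hpos : 0 < escapeProfile (3 * t - 1) x := escapeProfile_pos (by linarith) hx
  rw [hprofile]
  rcases le_total t (max R x * w) with hnear | hmid
  · refine le_trans ?_ (H.min_one_sub_one_mul_pk_le hR (by linarith) hx hw2 hnear)
    rw [← mul_assoc (√(2 * π))⁻¹]
    gcongr
    · exact min_le_right _ _
    · exact escapeProfile_le_min_one_sub_one (by linarith) hx
  · have htw : t / w ≤ 3 * t - 1 := by
      have := div_le_self (by linarith : 0 ≤ t) (by linarith : 1 ≤ w)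
      linarith
    refine le_trans ?_ (hfar t x w (by linarith) hx hw hmid)
    gcongr
    · exact min_le_left _ _
    · exact escapeProfile_anti (by positivity) htw hx

theorem bessel_heat_kernel_lower_bound_midstep (p₁ : ℝ → ℝ → ℝ → ℝ) (q : ℝ → ℝ → ℝ)
    (H : BesselHK p₁ q) :
    ∃ c : ℝ, 0 < c ∧ ∀ t x w : ℝ, 1 < t → 1 < x → x < w/2 → 1 + 2*Real.sqrt t < w →
      c * min 1 (Real.log x / Real.log (3*t)) * pk t x w ≤ p₁ t x w := by
  obtain ⟨c, hc, hle⟩ := bessel_heat_kernel_lower_bound_midstep_general (.of_besselHK H)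
  exact ⟨c, hc, fun t x w ht hx _ hw ↦ hle t x w ht.le hx (by linarith)⟩
end

section
/- For every z > 0 one has z/(z+2) ≤ I₁(z)/I₀(z) ≤ 2z/(2z+1). -/
open Real MeasureTheory

/-!
The upper bound says that `P(z) = z I_ν(z) - (z + ν + 1/2) I_{ν+1}(z)` is nonnegative. Dividing by
`(z/2)^(ν+1)` leaves an entire function `p`, and the recurrences for `I_ν` give
`z p' + (z + ν + 1/2) p = (ν + 1/2) (ν + 3/2) (z/2)^(-(ν+1)) I_{ν+1}`. The right-hand side is
nonnegative, so `exp(z) z^(ν+1/2) p` is nondecreasing, starting from a nonnegative value at `0`.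
In particular `I_{ν+1} ≤ I_ν`. The lower bound is this comparison one order higher,
`I_{ν+2} ≤ I_{ν+1}`, rewritten by `z I_ν = 2 (ν + 1) I_{ν+1} + z I_{ν+2}`.
-/

lemma inv_Gamma_eq_mul_inv_Gamma_add_one (s : ℝ) : (Gamma s)⁻¹ = s * (Gamma (s + 1))⁻¹ := by
  rcases eq_or_ne s 0 with rfl | hs
  · simp [Real.Gamma_zero]
  · rw [Gamma_add_one hs, mul_inv, mul_inv_cancel_left₀ hs]

lemma nonneg_of_mul_deriv_add_mul_nonneg {f f' : ℝ → ℝ} {a b : ℝ} (hb : 0 ≤ b)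
    (hcont : ContinuousOn f (Set.Ici 0)) (hderiv : ∀ x, 0 < x → HasDerivAt f (f' x) x)
    (hzero : 0 ≤ f 0) (hineq : ∀ x, 0 < x → 0 ≤ x * f' x + (a * x + b) * f x)
    {x : ℝ} (hx : 0 ≤ x) : 0 ≤ f x := by
  rcases hx.eq_or_lt with rfl | hxpos
  · exact hzero
  -- `exp (a x) x ^ b` is an integrating factor for `x f' + (a x + b) f`.
  have hderiv_mul : ∀ y, 0 < y → HasDerivAt (fun t => exp (a * t) * t ^ b * f t)
      (exp (a * y) * y ^ (b - 1) * (y * f' y + (a * y + b) * f y)) y := by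
    intro y hy
    have hexp : HasDerivAt (fun t => exp (a * t)) (exp (a * y) * (a * 1)) y :=
      ((hasDerivAt_id y).const_mul a).exp
    refine ((hexp.mul (hasDerivAt_rpow_const (Or.inl hy.ne'))).mul (hderiv y hy)).congr_deriv ?_
    rw [rpow_sub_one hy.ne', Pi.mul_apply]
    field_simp
    ring
  have hmono : MonotoneOn (fun t => exp (a * t) * t ^ b * f t) (Set.Ici 0) := by
    refine monotoneOn_of_hasDerivWithinAt_nonneg (convex_Ici 0) ?_
      (fun y hy => (hderiv_mul y (by simpa using hy)).hasDerivWithinAt) fun y hy => ?_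
    · exact ((continuous_const_mul a).rexp.mul (continuous_rpow_const hb)).continuousOn.mul hcont
    · have hypos : 0 < y := by simpa using hy
      have := hineq y hypos
      positivity
  refine nonneg_of_mul_nonneg_right (a := exp (a * x) * x ^ b) ?_ (by positivity)
  calc 0 ≤ exp (a * 0) * 0 ^ b * f 0 := by positivity
    _ ≤ exp (a * x) * x ^ b * f x := hmono Set.self_mem_Ici hx hx

/-- The Bessel–Clifford function `𝒞_ν`, that is, the regularized hypergeometric function
`₀F₁(; ν + 1; w)`: the factor of the modified Bessel function `I_ν` that is entire in `w = z² / 4`.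
Where `Gamma` has a pole, its junk value `0` gives the correct coefficient `0`. -/
noncomputable def besselClifford (ν w : ℝ) : ℝ :=
  ∑' k : ℕ, w ^ k / (k.factorial * Gamma (k + ν + 1))

lemma summable_besselClifford (ν w : ℝ) :
    Summable fun k : ℕ => w ^ k / (k.factorial * Gamma (k + ν + 1)) := by
  set a : ℕ → ℝ := fun k => w ^ k / (k.factorial * Gamma (k + ν + 1)) with ha
  have hratio : ∀ k : ℕ, a (k + 1) * ((k + 1) * (k + ν + 1)) = w * a k := by
    intro k
    simp only [ha, div_eq_mul_inv, mul_inv, inv_Gamma_eq_mul_inv_Gamma_add_one (k + ν + 1)]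
    rw [Nat.factorial_succ, show ((k + 1 : ℕ) : ℝ) + ν + 1 = k + ν + 1 + 1 by push_cast; ring]
    push_cast
    field_simp
    ring
  refine summable_of_ratio_norm_eventually_le (r := 1 / 2) (by norm_num) ?_
  filter_upwards [tendsto_natCast_atTop_atTop.eventually_ge_atTop (2 * |w|),
    tendsto_natCast_atTop_atTop.eventually_ge_atTop (-ν)] with k hkw hkν
  have hfactor : (k : ℝ) + 1 ≤ (k + 1) * (k + ν + 1) :=
    le_mul_of_one_le_right (by positivity) (by linarith)
  have hfactor_pos : 0 < ((k : ℝ) + 1) * (k + ν + 1) := lt_of_lt_of_le (by positivity) hfactor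
  refine le_of_mul_le_mul_right ?_ hfactor_pos
  calc ‖a (k + 1)‖ * ((k + 1) * (k + ν + 1))
      = |w| * ‖a k‖ := by
        rw [← abs_of_pos hfactor_pos, Real.norm_eq_abs, ← abs_mul, hratio, abs_mul,
          Real.norm_eq_abs]
    _ ≤ ((k + 1) * (k + ν + 1) / 2) * ‖a k‖ := by gcongr; linarith
    _ = 1 / 2 * ‖a k‖ * ((k + 1) * (k + ν + 1)) := by ring

lemma hasDerivAt_besselClifford (ν w : ℝ) :
    HasDerivAt (besselClifford ν) (besselClifford (ν + 1) w) w := by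
  have hsplit : besselClifford ν = fun y =>
      y ^ 0 / (Nat.factorial 0 * Gamma ((0 : ℕ) + ν + 1)) +
      ∑' k : ℕ, y ^ (k + 1) / ((k + 1).factorial * Gamma ((k + 1 : ℕ) + ν + 1)) :=
    funext fun y => (summable_besselClifford ν y).tsum_eq_zero_add
  have hterm : ∀ (k : ℕ) (y : ℝ),
      HasDerivAt (fun t => t ^ (k + 1) / ((k + 1).factorial * Gamma ((k + 1 : ℕ) + ν + 1)))
        (y ^ k / (k.factorial * Gamma (k + (ν + 1) + 1))) y := by
    intro k y
    refine ((hasDerivAt_pow (k + 1) y).div_const _).congr_deriv ?_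
    rw [Nat.factorial_succ, show ((k + 1 : ℕ) : ℝ) + ν + 1 = k + (ν + 1) + 1 by push_cast; ring,
      Nat.add_sub_cancel]
    push_cast
    field_simp
  rw [hsplit]
  simp only [pow_zero]
  refine HasDerivAt.const_add _ ?_
  refine hasDerivAt_tsum_of_isPreconnected (t := Metric.ball 0 (|w| + 1)) (y₀ := w)
    (summable_besselClifford (ν + 1) (|w| + 1)).norm Metric.isOpen_ball
    (convex_ball _ _).isPreconnected (fun k y _ => hterm k y) (fun k y hy => ?_) (by simp)
    ((summable_nat_add_iff 1).2 (summable_besselClifford ν w)) (by simp)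
  have hy_le : |y| ≤ |(|w| + 1)| := (mem_ball_zero_iff.1 hy).le.trans (le_abs_self _)
  simp only [norm_div, norm_pow, Real.norm_eq_abs]
  gcongr

lemma besselClifford_recurrence (ν w : ℝ) :
    besselClifford ν w =
      (ν + 1) * besselClifford (ν + 1) w + w * besselClifford (ν + 2) w := by
  set b : ℕ → ℝ := fun k => w ^ k / (k.factorial * Gamma (k + (ν + 1) + 1)) with hb
  have hshift : ∀ k : ℕ, ((k + 1 : ℕ) : ℝ) * b (k + 1) =
      w * (w ^ k / (k.factorial * Gamma (k + (ν + 2) + 1))) := by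
    intro k
    simp only [hb]
    rw [Nat.factorial_succ,
      show ((k + 1 : ℕ) : ℝ) + (ν + 1) + 1 = k + (ν + 2) + 1 by push_cast; ring]
    push_cast
    field_simp
    ring
  have hsummable : Summable fun k : ℕ => (k : ℝ) * b k := by
    rw [← summable_nat_add_iff 1]
    simp only [hshift]
    exact (summable_besselClifford (ν + 2) w).mul_left w
  have htsum : ∑' k : ℕ, (k : ℝ) * b k = w * besselClifford (ν + 2) w := by
    rw [hsummable.tsum_eq_zero_add, besselClifford, ← tsum_mul_left]
    simp only [hshift, Nat.cast_zero, zero_mul, zero_add]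
  have hcoeff : ∀ k : ℕ,
      w ^ k / (k.factorial * Gamma (k + ν + 1)) = (ν + 1) * b k + k * b k := by
    intro k
    simp only [hb, div_eq_mul_inv, mul_inv, inv_Gamma_eq_mul_inv_Gamma_add_one (k + ν + 1)]
    rw [show (k : ℝ) + (ν + 1) + 1 = k + ν + 1 + 1 by ring]
    ring
  calc besselClifford ν w = ∑' k : ℕ, ((ν + 1) * b k + k * b k) := tsum_congr hcoeff
    _ = (ν + 1) * ∑' k, b k + ∑' k : ℕ, k * b k := by
      rw [((summable_besselClifford (ν + 1) w).mul_left _).tsum_add hsummable, tsum_mul_left]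
    _ = (ν + 1) * besselClifford (ν + 1) w + w * besselClifford (ν + 2) w :=
      congrArg (_ + ·) htsum

lemma besselClifford_pos {ν w : ℝ} (hν : -1 < ν) (hw : 0 ≤ w) : 0 < besselClifford ν w := by
  have hGamma : ∀ k : ℕ, 0 < Gamma (k + ν + 1) := fun k =>
    Gamma_pos_of_pos (by linarith [k.cast_nonneg (α := ℝ)])
  refine (summable_besselClifford ν w).tsum_pos (fun k => ?_) 0 ?_
  · have := hGamma k
    positivity
  · have := hGamma 0
    simp only [pow_zero]
    positivity

lemma hasDerivAt_besselClifford_sq_div_four (ν z : ℝ) :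
    HasDerivAt (fun x => besselClifford ν (x ^ 2 / 4))
      (z / 2 * besselClifford (ν + 1) (z ^ 2 / 4)) z := by
  have hsq : HasDerivAt (fun x : ℝ => x ^ 2 / 4) (z / 2) z :=
    ((hasDerivAt_pow 2 z).div_const 4).congr_deriv (by push_cast; ring)
  exact ((hasDerivAt_besselClifford ν _).comp z hsq).congr_deriv (mul_comm _ _)

lemma add_mul_besselClifford_add_one_le {ν z : ℝ} (hν : -1 / 2 ≤ ν) (hz : 0 ≤ z) :
    (z + ν + 1 / 2) * besselClifford (ν + 1) (z ^ 2 / 4) ≤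
      2 * besselClifford ν (z ^ 2 / 4) := by
  set c : ℝ → ℝ → ℝ := fun κ x => besselClifford κ (x ^ 2 / 4)
  have hderiv : ∀ x, HasDerivAt (fun y => 2 * c ν y - (y + ν + 1 / 2) * c (ν + 1) y)
      (x * c (ν + 1) x - (c (ν + 1) x + (x + ν + 1 / 2) * (x / 2 * c (ν + 2) x))) x := by
    intro x
    have hlinear : HasDerivAt (fun y : ℝ => y + ν + 1 / 2) 1 x :=
      ((hasDerivAt_id x).add_const ν).add_const (1 / 2)
    refine (((hasDerivAt_besselClifford_sq_div_four ν x).const_mul 2).sub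
      (hlinear.mul (hasDerivAt_besselClifford_sq_div_four (ν + 1) x))).congr_deriv ?_
    rw [show ν + 1 + 1 = ν + 2 by ring]
    ring
  have hrec : ∀ x, c ν x = (ν + 1) * c (ν + 1) x + x ^ 2 / 4 * c (ν + 2) x := fun x =>
    besselClifford_recurrence ν _
  have hpos : ∀ x, 0 < c (ν + 1) x := fun x =>
    besselClifford_pos (by linarith) (by positivity)
  rw [← sub_nonneg]
  refine nonneg_of_mul_deriv_add_mul_nonneg (a := 1) (b := ν + 1 / 2) (by linarith)
    (fun x _ => (hderiv x).continuousAt.continuousWithinAt) (fun x _ => hderiv x) ?_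
    (fun x _ => ?_) hz
  · have hvalue : 2 * c ν 0 - (0 + ν + 1 / 2) * c (ν + 1) 0 = (ν + 3 / 2) * c (ν + 1) 0 := by
      rw [hrec]
      ring
    rw [hvalue]
    exact mul_nonneg (by linarith) (hpos 0).le
  · have hode : x * (x * c (ν + 1) x - (c (ν + 1) x + (x + ν + 1 / 2) * (x / 2 * c (ν + 2) x))) +
        (1 * x + (ν + 1 / 2)) * (2 * c ν x - (x + ν + 1 / 2) * c (ν + 1) x) =
        (ν + 1 / 2) * (ν + 3 / 2) * c (ν + 1) x := by
      rw [hrec]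
      ring
    rw [hode]
    exact mul_nonneg (mul_nonneg (by linarith) (by linarith)) (hpos x).le

/-- The modified Bessel function of the first kind `I_ν` of real order `ν`, meant for `z > 0`
(or for all `z` when `ν` is a natural number), since `(z / 2) ^ ν` is a real power. -/
noncomputable def besselI (ν z : ℝ) : ℝ :=
  (z / 2) ^ ν * besselClifford ν (z ^ 2 / 4)

lemma besselI_zero_eq_I0 (z : ℝ) : besselI 0 z = I0 z := by
  rw [besselI, besselClifford, I0, rpow_zero, one_mul]
  refine tsum_congr fun k => ?_
  rw [add_zero, Gamma_nat_eq_factorial, pow_mul]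
  ring

lemma besselI_one_eq_I1 (z : ℝ) : besselI 1 z = I1 z := by
  rw [besselI, besselClifford, I1, rpow_one, ← tsum_mul_left]
  refine tsum_congr fun k => ?_
  rw [← Nat.cast_add_one, Gamma_nat_eq_factorial, pow_succ (z / 2), pow_mul]
  ring

lemma besselI_pos {ν z : ℝ} (hν : -1 < ν) (hz : 0 < z) : 0 < besselI ν z :=
  mul_pos (by positivity) (besselClifford_pos hν (by positivity))

lemma besselI_add_one (ν : ℝ) {z : ℝ} (hz : 0 < z) :
    besselI (ν + 1) z = (z / 2) ^ ν * (z / 2 * besselClifford (ν + 1) (z ^ 2 / 4)) := by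
  rw [besselI, rpow_add_one (by positivity), mul_assoc]

lemma besselI_recurrence (ν : ℝ) {z : ℝ} (hz : 0 < z) :
    z * besselI ν z = 2 * (ν + 1) * besselI (ν + 1) z + z * besselI (ν + 2) z := by
  have hpow : (z / 2) ^ (ν + 2) = (z / 2) ^ ν * (z / 2) ^ 2 := rpow_add_natCast (by positivity) ν 2
  rw [besselI_add_one ν hz, besselI, besselI, hpow, besselClifford_recurrence]
  ring

lemma add_mul_besselI_add_one_le {ν z : ℝ} (hν : -1 / 2 ≤ ν) (hz : 0 < z) :
    (z + ν + 1 / 2) * besselI (ν + 1) z ≤ z * besselI ν z := by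
  have hbound := add_mul_besselClifford_add_one_le hν hz.le
  have hfactor : 0 < (z / 2) ^ ν * (z / 2) := by positivity
  rw [besselI_add_one ν hz, besselI]
  nlinarith [mul_le_mul_of_nonneg_left hbound hfactor.le]

lemma besselI_add_one_le {ν z : ℝ} (hν : -1 / 2 ≤ ν) (hz : 0 < z) :
    besselI (ν + 1) z ≤ besselI ν z := by
  have hpos : 0 < besselI (ν + 1) z := besselI_pos (by linarith) hz
  refine le_of_mul_le_mul_left ?_ hz
  calc z * besselI (ν + 1) z ≤ (z + ν + 1 / 2) * besselI (ν + 1) z := by gcongr; linarith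
    _ ≤ z * besselI ν z := add_mul_besselI_add_one_le hν hz

lemma mul_besselI_le_add_mul_besselI_add_one {ν z : ℝ} (hν : -3 / 2 ≤ ν) (hz : 0 < z) :
    z * besselI ν z ≤ (z + 2 * (ν + 1)) * besselI (ν + 1) z := by
  have hmono : besselI (ν + 2) z ≤ besselI (ν + 1) z := by
    simpa [add_assoc, one_add_one_eq_two] using
      besselI_add_one_le (ν := ν + 1) (by linarith) hz
  calc z * besselI ν z
      = 2 * (ν + 1) * besselI (ν + 1) z + z * besselI (ν + 2) z := besselI_recurrence ν hz
    _ ≤ 2 * (ν + 1) * besselI (ν + 1) z + z * besselI (ν + 1) z := by gcongr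
    _ = (z + 2 * (ν + 1)) * besselI (ν + 1) z := by ring

theorem besselI1_div_I0_bounds_general {ν z : ℝ} (hν : -1 / 2 ≤ ν) (hz : 0 < z) :
    z / (z + 2 * (ν + 1)) ≤ besselI (ν + 1) z / besselI ν z ∧
      besselI (ν + 1) z / besselI ν z ≤ 2 * z / (2 * z + (2 * ν + 1)) := by
  have hpos : 0 < besselI ν z := besselI_pos (by linarith) hz
  constructor
  · rw [div_le_div_iff₀ (by linarith) hpos, mul_comm (besselI _ _)]
    exact mul_besselI_le_add_mul_besselI_add_one (by linarith) hz
  · rw [div_le_div_iff₀ hpos (by linarith)]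
    linarith [add_mul_besselI_add_one_le hν hz]

theorem besselI1_div_I0_bounds :
    ∀ z : ℝ, 0 < z → z/(z+2) ≤ I1 z / I0 z ∧ I1 z / I0 z ≤ 2*z/(2*z+1) := by
  intro z hz
  simpa [besselI_zero_eq_I0, besselI_one_eq_I1] using
    besselI1_div_I0_bounds_general (ν := 0) (by norm_num) hz
end
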